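/- Theorem 3, first part: if 0 < θ < π/3, then the length of the minimum construction tree is strictly less than the length of the full Steiner tree: 2·dist(A₁',F₁₂) + 2·dist(A₃,F₃₄) + 2·sin(θ/2)·dist(F₁₂,F₃₄) < 2·dist(A₁',O₁₂) + 2·dist(A₃,O₃₄) + dist(O₁₂,O₃₄); equivalently, 2·(a12 + a34)·cos(θ/2) < (a12 + a34)·(√3/2 + cos(θ/2)/(2·sin(θ/2))). -/

import Mathlib

open Real EuclideanGeometry

noncomputable def pt (x y : ℝ) : EuclideanSpace ℝ (Fin 2) :=
  (WithLp.equiv 2 (Fin 2 → ℝ)).symm ![x, y]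

/-! The minimum construction tree and the full Steiner tree belong to one family: four arms inclined
at an angle `ψ` to the horizontal and a vertical bridge of weight `2 * sin ψ`, with `ψ = θ / 2` and
`ψ = π / 6` respectively. The weighted length is `(a + b) * cos ψ + 2 * d * sin ψ`, which for
`a + b = 2 * d * tan φ` equals `2 * d * sin (φ + ψ) / cos φ`. Hence it increases strictly with `ψ`
as long as `φ + ψ ≤ π / 2`, and `φ = θ / 2 < π / 6` gives the comparison. -/

lemma dist_pt (x y x' y' : ℝ) : dist (pt x y) (pt x' y') = √((x - x') ^ 2 + (y - y') ^ 2) := by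
  simp [EuclideanSpace.dist_eq, pt, Real.dist_eq]

lemma dist_pt_of_eq_left (x y y' : ℝ) : dist (pt x y) (pt x y') = |y - y'| := by
  simp [dist_pt, Real.sqrt_sq_eq_abs]

lemma dist_pt_sub_mul_tan {ψ : ℝ} (hψ : 0 < cos ψ) (x y x' : ℝ) :
    dist (pt x y) (pt x' (y - (x' - x) * tan ψ)) = |x' - x| / cos ψ := by
  calc dist (pt x y) (pt x' (y - (x' - x) * tan ψ))
      = √((x' - x) ^ 2 * (1 + tan ψ ^ 2)) := by rw [dist_pt]; congr 1; ring
    _ = |x' - x| * √(1 + tan ψ ^ 2) := by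
        rw [Real.sqrt_mul (sq_nonneg _), Real.sqrt_sq_eq_abs]
    _ = |x' - x| / cos ψ := by
        rw [div_eq_mul_inv, ← Real.inv_sqrt_one_add_tan_sq hψ, inv_inv]

/-- The weighted length of the tree joining the vertices `(∓a / 2, d)` and `(±b / 2, 0)` of an
isosceles trapezium through two branch points on its axis, where the arms make the angle `ψ` with
the horizontal and the bridge between the branch points has weight `2 * sin ψ`, which balances the
two arms at each branch point. By symmetry each pair of arms is recorded as twice one arm. -/
noncomputable def weightedTreeLength (a b d ψ : ℝ) : ℝ :=
  2 * dist (pt (-(a / 2)) d) (pt 0 (d - a / 2 * tan ψ)) +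
    2 * dist (pt (b / 2) 0) (pt 0 (b / 2 * tan ψ)) +
    2 * sin ψ * dist (pt 0 (d - a / 2 * tan ψ)) (pt 0 (b / 2 * tan ψ))

lemma weightedTreeLength_pi_div_six_eq_dist (a b d : ℝ) :
    weightedTreeLength a b d (π / 6) =
      2 * dist (pt (-(a / 2)) d) (pt 0 (d - a / (2 * √3))) +
        2 * dist (pt (b / 2) 0) (pt 0 (b / (2 * √3))) +
        dist (pt 0 (d - a / (2 * √3))) (pt 0 (b / (2 * √3))) := by
  simp only [weightedTreeLength, Real.tan_pi_div_six, Real.sin_pi_div_six, div_mul_div_comm,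
    mul_one, one_mul, mul_one_div_cancel (two_ne_zero (α := ℝ))]

section

variable {a b d φ ψ : ℝ}

lemma weightedTreeLength_eq_cos_add_sin (ha : 0 ≤ a) (hb : 0 ≤ b) (hψ : 0 < cos ψ)
    (hd : (a + b) / 2 * tan ψ ≤ d) :
    weightedTreeLength a b d ψ = (a + b) * cos ψ + 2 * d * sin ψ := by
  have upper_arm : dist (pt (-(a / 2)) d) (pt 0 (d - a / 2 * tan ψ)) = a / 2 / cos ψ := by
    simpa [abs_of_nonneg (div_nonneg ha zero_le_two)] using dist_pt_sub_mul_tan hψ (-(a / 2)) d 0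
  have lower_arm : dist (pt (b / 2) 0) (pt 0 (b / 2 * tan ψ)) = b / 2 / cos ψ := by
    simpa [abs_of_nonneg (div_nonneg hb zero_le_two)] using dist_pt_sub_mul_tan hψ (b / 2) 0 0
  have bridge : dist (pt 0 (d - a / 2 * tan ψ)) (pt 0 (b / 2 * tan ψ)) =
      d - (a + b) / 2 * tan ψ := by
    rw [dist_pt_of_eq_left, abs_of_nonneg (by linarith)]
    ring
  rw [weightedTreeLength, upper_arm, lower_arm, bridge, tan_eq_sin_div_cos]
  field_simp
  linear_combination -(a + b) * sin_sq_add_cos_sq ψ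

lemma tan_mul_tan_le_one (hφ : 0 < cos φ) (hψ : 0 < cos ψ) (h : 0 ≤ cos (φ + ψ)) :
    tan φ * tan ψ ≤ 1 := by
  rw [tan_eq_sin_div_cos, tan_eq_sin_div_cos, div_mul_div_comm, div_le_one (mul_pos hφ hψ)]
  linarith [cos_add φ ψ]

lemma weightedTreeLength_eq_sin_add (ha : 0 ≤ a) (hb : 0 ≤ b) (hd : 0 ≤ d)
    (hab : a + b = 2 * d * tan φ) (hφ : 0 < cos φ) (hψ : 0 < cos ψ) (h : 0 ≤ cos (φ + ψ)) :
    weightedTreeLength a b d ψ = 2 * d * sin (φ + ψ) / cos φ := by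
  have branch_points_ordered : (a + b) / 2 * tan ψ ≤ d := by
    linear_combination tan ψ / 2 * hab + d * tan_mul_tan_le_one hφ hψ h
  rw [weightedTreeLength_eq_cos_add_sin ha hb hψ branch_points_ordered, hab, sin_add,
    tan_eq_sin_div_cos]
  field_simp

lemma weightedTreeLength_strictMonoOn (ha : 0 ≤ a) (hb : 0 ≤ b) (hd : 0 < d)
    (hab : a + b = 2 * d * tan φ) (hφ : φ ∈ Set.Ioo 0 (π / 2)) :
    StrictMonoOn (weightedTreeLength a b d) (Set.Icc 0 (π / 2 - φ)) := by
  obtain ⟨hφ₀, hφ₁⟩ := hφ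
  have cos_φ_pos : 0 < cos φ := cos_pos_of_mem_Ioo ⟨by linarith, hφ₁⟩
  have length_eq : ∀ ψ ∈ Set.Icc 0 (π / 2 - φ),
      weightedTreeLength a b d ψ = 2 * d * sin (φ + ψ) / cos φ := fun ψ hψ ↦
    weightedTreeLength_eq_sin_add ha hb hd.le hab cos_φ_pos
      (cos_pos_of_mem_Ioo ⟨by linarith [hψ.1], by linarith [hψ.2]⟩)
      (cos_nonneg_of_mem_Icc ⟨by linarith [hψ.1], by linarith [hψ.2]⟩)
  intro ψ hψ ψ' hψ' hlt
  have sin_lt : sin (φ + ψ) < sin (φ + ψ') :=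
    sin_lt_sin_of_lt_of_le_pi_div_two (by linarith [hψ.1]) (by linarith [hψ'.2]) (by linarith)
  rw [length_eq ψ hψ, length_eq ψ' hψ']
  gcongr

lemma weightedTreeLength_self (ha : 0 ≤ a) (hb : 0 ≤ b) (hd : 0 ≤ d)
    (hab : a + b = 2 * d * tan φ) (hφ : φ ∈ Set.Icc 0 (π / 4)) :
    weightedTreeLength a b d φ = 2 * (a + b) * cos φ := by
  obtain ⟨hφ₀, hφ₁⟩ := hφ
  have cos_pos : 0 < cos φ := cos_pos_of_mem_Ioo ⟨by linarith [pi_pos], by linarith [pi_pos]⟩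
  have cos_nonneg : 0 ≤ cos (φ + φ) := cos_nonneg_of_mem_Icc ⟨by linarith, by linarith⟩
  rw [weightedTreeLength_eq_sin_add ha hb hd hab cos_pos cos_pos cos_nonneg, hab, ← two_mul,
    sin_two_mul, tan_eq_sin_div_cos]
  field_simp

lemma weightedTreeLength_pi_div_six (ha : 0 ≤ a) (hb : 0 ≤ b) (hd : 0 ≤ d)
    (hab : a + b = 2 * d * tan φ) (hφ : φ ∈ Set.Ioc 0 (π / 3)) :
    weightedTreeLength a b d (π / 6) = (a + b) * (√3 / 2 + cos φ / (2 * sin φ)) := by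
  obtain ⟨hφ₀, hφ₁⟩ := hφ
  have sin_pos : 0 < sin φ := sin_pos_of_pos_of_lt_pi hφ₀ (by linarith [pi_pos])
  have cos_pos : 0 < cos φ := cos_pos_of_mem_Ioo ⟨by linarith [pi_pos], by linarith [pi_pos]⟩
  have cos_pi_div_six_pos : 0 < cos (π / 6) := by rw [cos_pi_div_six]; positivity
  have cos_nonneg : 0 ≤ cos (φ + π / 6) := cos_nonneg_of_mem_Icc ⟨by linarith, by linarith⟩
  rw [weightedTreeLength_eq_sin_add ha hb hd hab cos_pos cos_pi_div_six_pos cos_nonneg, hab,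
    sin_add, sin_pi_div_six, cos_pi_div_six, tan_eq_sin_div_cos]
  field_simp

end

theorem stmt_11_general {a12 a34 d θ : ℝ} (ha12 : 0 ≤ a12) (ha34 : 0 ≤ a34)
    (hθ : θ = 2 * arctan ((a12 + a34) / (2 * d))) (hθ' : 0 < θ ∧ θ < π / 3)
    {A₁' A₃ F₁₂ F₃₄ O₁₂ O₃₄ : EuclideanSpace ℝ (Fin 2)}
    (hA₁ : A₁' = pt (-(a12 / 2)) d) (hA₃ : A₃ = pt (a34 / 2) 0)
    (hF₁₂ : F₁₂ = pt 0 (d - a12 / 2 * tan (θ / 2))) (hF₃₄ : F₃₄ = pt 0 (a34 / 2 * tan (θ / 2)))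
    (hO₁₂ : O₁₂ = pt 0 (d - a12 / (2 * √3))) (hO₃₄ : O₃₄ = pt 0 (a34 / (2 * √3))) :
    2 * dist A₁' F₁₂ + 2 * dist A₃ F₃₄ + 2 * sin (θ / 2) * dist F₁₂ F₃₄ <
      2 * dist A₁' O₁₂ + 2 * dist A₃ O₃₄ + dist O₁₂ O₃₄ ∧
    2 * (a12 + a34) * cos (θ / 2) <
      (a12 + a34) * (√3 / 2 + cos (θ / 2) / (2 * sin (θ / 2))) := by
  obtain ⟨hθ₀, hθ₁⟩ := hθ'
  have tan_eq : tan (θ / 2) = (a12 + a34) / (2 * d) := by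
    rw [hθ, mul_div_cancel_left₀ _ two_ne_zero, tan_arctan]
  have tan_pos : 0 < tan (θ / 2) := tan_pos_of_pos_of_lt_pi_div_two (by linarith) (by linarith)
  have hd : 0 < d := by
    by_contra! hd
    exact tan_pos.not_ge (tan_eq ▸ div_nonpos_of_nonneg_of_nonpos (by linarith) (by linarith))
  have hab : a12 + a34 = 2 * d * tan (θ / 2) := by rw [tan_eq]; field_simp
  have length_lt : weightedTreeLength a12 a34 d (θ / 2) < weightedTreeLength a12 a34 d (π / 6) :=
    weightedTreeLength_strictMonoOn ha12 ha34 hd hab ⟨by linarith, by linarith⟩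
      ⟨by linarith, by linarith⟩ ⟨by linarith, by linarith⟩ (by linarith)
  constructor
  · rw [weightedTreeLength_pi_div_six_eq_dist] at length_lt
    subst hA₁ hA₃ hF₁₂ hF₃₄ hO₁₂ hO₃₄
    exact length_lt
  · rwa [weightedTreeLength_self ha12 ha34 hd.le hab ⟨by linarith, by linarith⟩,
      weightedTreeLength_pi_div_six ha12 ha34 hd.le hab ⟨by linarith, by linarith⟩] at length_lt

theorem stmt_11 (a12 a34 d θ : ℝ) (ha12 : 0 < a12) (ha34 : 0 < a34)
    (hd : max a12 a34 < d)
    (hθ : θ = 2 * Real.arctan ((a12 + a34) / (2 * d)))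
    (hθ' : 0 < θ ∧ θ < π / 3)
    (A₁' A₂' A₃ A₄ F₁₂ F₃₄ O₁₂ O₃₄ : EuclideanSpace ℝ (Fin 2))
    (hA₁ : A₁' = pt (-(a12 / 2)) d) (hA₂ : A₂' = pt (a12 / 2) d)
    (hA₃ : A₃ = pt (a34 / 2) 0) (hA₄ : A₄ = pt (-(a34 / 2)) 0)
    (hF₁₂ : F₁₂ = pt 0 (d - a12 / 2 * Real.tan (θ / 2)))
    (hF₃₄ : F₃₄ = pt 0 (a34 / 2 * Real.tan (θ / 2)))
    (hO₁₂ : O₁₂ = pt 0 (d - a12 / (2 * Real.sqrt 3)))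
    (hO₃₄ : O₃₄ = pt 0 (a34 / (2 * Real.sqrt 3))) :
    2 * dist A₁' F₁₂ + 2 * dist A₃ F₃₄ + 2 * Real.sin (θ / 2) * dist F₁₂ F₃₄ <
      2 * dist A₁' O₁₂ + 2 * dist A₃ O₃₄ + dist O₁₂ O₃₄ ∧
    2 * (a12 + a34) * Real.cos (θ / 2) <
      (a12 + a34) * (Real.sqrt 3 / 2 + Real.cos (θ / 2) / (2 * Real.sin (θ / 2))) :=
  stmt_11_general ha12.le ha34.le hθ hθ' hA₁ hA₃ hF₁₂ hF₃₄ hO₁₂ hO₃₄
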